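/- Waldhauser's Theorem on cyclically symmetric minimal majority clones. Let C be a minimal clone on a set A generated by a majority operation, and suppose C contains only finitely many majority operations and every majority operation in C is cyclically symmetric, i.e. satisfies f(x₁,x₂,x₃) = f(x₂,x₃,x₁) for all x₁,x₂,x₃ ∈ A. Then C contains exactly one majority operation. -/

import Mathlib

universe u

/-- The type of finitary operations (of positive arity `n + 1`) on `A`. -/
abbrev Ops (A : Type u) : Type u := Σ n : ℕ, (Fin (n + 1) → A) → A

/-- A set of finitary operations on `A` is a clone if it contains all projection
operations and is closed under composition. -/
def IsClone {A : Type u} (C : Set (Ops A)) : Prop :=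
  (∀ (n : ℕ) (i : Fin (n + 1)), (⟨n, fun x => x i⟩ : Ops A) ∈ C) ∧
  ∀ (n m : ℕ) (f : (Fin (n + 1) → A) → A) (g : Fin (n + 1) → (Fin (m + 1) → A) → A),
    (⟨n, f⟩ : Ops A) ∈ C → (∀ i, (⟨m, g i⟩ : Ops A) ∈ C) →
    (⟨m, fun x => f fun i => g i x⟩ : Ops A) ∈ C

/-- The clone generated by a set `F` of operations: the least clone containing `F`. -/
def cloneGen {A : Type u} (F : Set (Ops A)) : Set (Ops A) :=
  ⋂₀ {C : Set (Ops A) | IsClone C ∧ F ⊆ C}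

/-- The clone of all projection operations on `A`. -/
def projClone (A : Type u) : Set (Ops A) :=
  {f : Ops A | ∃ i : Fin (f.1 + 1), f.2 = fun x => x i}

/-- A clone `M` is maximal if it is a proper subclone of the clone of all operations
and the clone of all operations is the only clone properly containing it. -/
def IsMaximalClone {A : Type u} (M : Set (Ops A)) : Prop :=
  IsClone M ∧ M ≠ Set.univ ∧
    ∀ D : Set (Ops A), IsClone D → M ⊆ D → D = M ∨ D = Set.univ

/-- A clone `C` is minimal if the clone of projections is its unique proper subclone. -/
def IsMinimalClone {A : Type u} (C : Set (Ops A)) : Prop :=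
  IsClone C ∧ C ≠ projClone A ∧
    ∀ D : Set (Ops A), IsClone D → D ⊆ C → D = projClone A ∨ D = C

/-- An `n`-ary operation `f` preserves a `k`-ary relation `ρ` if applying `f`
coordinatewise to tuples from `ρ` always yields a tuple in `ρ`. -/
def Preserves {A : Type u} {n k : ℕ} (f : (Fin n → A) → A) (ρ : Set (Fin k → A)) : Prop :=
  ∀ t : Fin n → Fin k → A, (∀ i, t i ∈ ρ) → (fun j => f fun i => t i j) ∈ ρ

/-- `Pol ρ` is the clone of all operations preserving the relation `ρ`. -/
def Pol {A : Type u} {k : ℕ} (ρ : Set (Fin k → A)) : Set (Ops A) :=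
  {f : Ops A | Preserves f.2 ρ}

/-- A majority operation: a ternary operation satisfying
`m(x,x,y) = m(x,y,x) = m(y,x,x) = x`. -/
def IsMajority {A : Type u} (f : (Fin 3 → A) → A) : Prop :=
  ∀ x y : A, f ![x, x, y] = x ∧ f ![x, y, x] = x ∧ f ![y, x, x] = x

/-- The set of majority operations belonging to a clone `C`. -/
def majorityOpsIn {A : Type u} (C : Set (Ops A)) : Set ((Fin 3 → A) → A) :=
  {g | IsMajority g ∧ (⟨2, g⟩ : Ops A) ∈ C}

/-!
Let `p` be a majority operation in `C`. For fixed `z`, iterate the map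
`(x, y) ↦ (p(x, y, z), p(y, x, z))` on pairs. Cyclic symmetry of `p` and of the first component of
the second iterate implies that the periodic points of this map lie on the diagonal. As `C` has
finitely many majority operations, the iterates eventually repeat, so some iterate yields a majority
operation symmetric in `x` and `y`, hence totally symmetric. Iterating the latter in its first
variable until it becomes idempotent there gives a totally symmetric majority operation `e` with
`e(e(x, y, z), y, z) = e(x, y, z)`. Then `{x, y, z, e(x, y, z)}` is closed under `e`, so `e` is the
only majority operation in the clone it generates, and that clone is `C` by minimality.
-/

/-! ### Clones -/

section Clone

variable {A : Type u} {C F : Set (Ops A)}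

theorem isClone_cloneGen (F : Set (Ops A)) : IsClone (cloneGen F) :=
  ⟨fun n i _ hD => hD.1.1 n i,
    fun n m f g hf hg D hD => hD.1.2 n m f g (hf D hD) fun i => hg i D hD⟩

theorem subset_cloneGen (F : Set (Ops A)) : F ⊆ cloneGen F :=
  fun _ ho _ hD => hD.2 ho

theorem cloneGen_subset (hC : IsClone C) (hF : F ⊆ C) : cloneGen F ⊆ C :=
  fun _ ho => ho C ⟨hC, hF⟩

theorem IsClone.projClone_subset (hC : IsClone C) : projClone A ⊆ C := by
  rintro ⟨n, f⟩ ⟨i, hi⟩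
  replace hi : f = fun x => x i := hi
  rw [hi]
  exact hC.1 n i

theorem IsMinimalClone.nontrivial (hC : IsMinimalClone C) : Nontrivial A := by
  by_contra hA
  have : Subsingleton A := not_nontrivial_iff_subsingleton.mp hA
  have hproj : ∀ o : Ops A, o ∈ projClone A := fun _ => ⟨0, Subsingleton.elim _ _⟩
  exact hC.2.1 (Set.Subset.antisymm (fun o _ => hproj o) hC.1.projClone_subset)

theorem IsMinimalClone.cloneGen_singleton_eq (hC : IsMinimalClone C) {o : Ops A} (ho : o ∈ C)
    (ho' : o ∉ projClone A) : cloneGen {o} = C := by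
  have hsub : cloneGen {o} ⊆ C := cloneGen_subset hC.1 (Set.singleton_subset_iff.mpr ho)
  refine (hC.2.2 _ (isClone_cloneGen {o}) hsub).resolve_left fun h => ho' ?_
  exact h ▸ subset_cloneGen {o} rfl

/-- The clone of all operations that, applied pointwise, preserve the set `S` of functions
`X → A`. This is `Pol` for a relation whose coordinates are indexed by an arbitrary type `X`. -/
def polFun {X : Type*} (S : Set (X → A)) : Set (Ops A) :=
  {o | ∀ q : Fin (o.1 + 1) → X → A, (∀ i, q i ∈ S) → (fun t => o.2 fun i => q i t) ∈ S}

theorem isClone_polFun {X : Type*} (S : Set (X → A)) : IsClone (polFun S) :=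
  ⟨fun _ i _ hq => hq i, fun _ _ _ _ hf hg q hq => hf _ fun i => hg i q hq⟩

theorem mem_of_mem_cloneGen {n : ℕ} {S : Set ((Fin (n + 1) → A) → A)} (hF : F ⊆ polFun S)
    (hproj : ∀ i, (fun t => t i) ∈ S) {f : (Fin (n + 1) → A) → A}
    (hf : (⟨n, f⟩ : Ops A) ∈ cloneGen F) : f ∈ S :=
  cloneGen_subset (isClone_polFun S) hF hf (fun i t => t i) hproj

end Clone

/-! ### Ternary operations -/

section Ternary

variable {A : Type u} {C : Set (Ops A)} {p q r s : A → A → A → A}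

/-- The operation on `Fin 3 → A` with curried form `p`; identities are stated for curried forms so
that they involve no tuples. -/
def ternaryOp (p : A → A → A → A) : (Fin 3 → A) → A :=
  fun t => p (t 0) (t 1) (t 2)

theorem ternaryOp_injective : Function.Injective (ternaryOp (A := A)) := fun p q h => by
  funext x y z
  exact congrFun h ![x, y, z]

theorem ternaryOp_surjective : Function.Surjective (ternaryOp (A := A)) := fun f => by
  refine ⟨fun x y z => f ![x, y, z], funext fun t => congrArg f ?_⟩
  ext i
  fin_cases i <;> rfl

theorem IsClone.ternaryOp_comp_mem (hC : IsClone C) (hp : (⟨2, ternaryOp p⟩ : Ops A) ∈ C)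
    (hq : (⟨2, ternaryOp q⟩ : Ops A) ∈ C) (hr : (⟨2, ternaryOp r⟩ : Ops A) ∈ C)
    (hs : (⟨2, ternaryOp s⟩ : Ops A) ∈ C) :
    (⟨2, ternaryOp fun x y z => p (q x y z) (r x y z) (s x y z)⟩ : Ops A) ∈ C := by
  refine hC.2 2 2 (ternaryOp p) ![ternaryOp q, ternaryOp r, ternaryOp s] hp fun i => ?_
  fin_cases i
  exacts [hq, hr, hs]

theorem IsMajority.apply_left (hp : IsMajority (ternaryOp p)) (x y : A) : p x x y = x :=
  (hp x y).1

theorem IsMajority.apply_outer (hp : IsMajority (ternaryOp p)) (x y : A) : p x y x = x :=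
  (hp x y).2.1

theorem IsMajority.apply_right (hp : IsMajority (ternaryOp p)) (x y : A) : p y x x = x :=
  (hp x y).2.2

theorem IsMajority.ne_proj [Nontrivial A] {f : (Fin 3 → A) → A} (hf : IsMajority f) (i : Fin 3) :
    f ≠ fun t => t i := by
  rintro rfl
  obtain ⟨x, y, hxy⟩ := exists_pair_ne A
  have := hf x y
  fin_cases i <;> simp_all

theorem IsMajority.notMem_projClone [Nontrivial A] {f : (Fin 3 → A) → A} (hf : IsMajority f) :
    (⟨2, f⟩ : Ops A) ∉ projClone A :=
  fun ⟨i, hi⟩ => hf.ne_proj i hi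

/-- Invariance of a curried ternary operation under cyclic shifts of its arguments. -/
def CyclicallySymmetric (p : A → A → A → A) : Prop :=
  ∀ x y z, p x y z = p y z x

end Ternary

theorem isPeriodicPt_iterate_of_iterate_eq {α : Type*} {f : α → α} {a : α} {m n : ℕ}
    (hmn : m ≤ n) (h : f^[m] a = f^[n] a) : Function.IsPeriodicPt f (n - m) (f^[m] a) := by
  rw [Function.IsPeriodicPt, Function.IsFixedPt, ← Function.iterate_add_apply,
    Nat.sub_add_cancel hmn, h]

/-! ### Symmetrization in the first two variables -/

section SwapStep

variable {A : Type u} {C : Set (Ops A)} {p : A → A → A → A}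

/-- The map `(x, y) ↦ (p(x, y, z), p(y, x, z))`, whose iterates symmetrize `p`. -/
def swapStep (p : A → A → A → A) (z : A) (a : A × A) : A × A :=
  (p a.1 a.2 z, p a.2 a.1 z)

/-- The ternary operation given by the first component of the `n`-th iterate of `swapStep p z`
at `(x, y)`. -/
def swapIterate (p : A → A → A → A) (n : ℕ) (x y z : A) : A :=
  ((swapStep p z)^[n] (x, y)).1

theorem iterate_swapStep (p : A → A → A → A) (n : ℕ) (x y z : A) :
    (swapStep p z)^[n] (x, y) = (swapIterate p n x y z, swapIterate p n y x z) := by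
  have hswap : Function.Semiconj Prod.swap (swapStep p z) (swapStep p z) :=
    fun _ => rfl
  exact Prod.ext rfl (congrArg Prod.fst (hswap.iterate_right n (x, y)))

theorem swapIterate_succ (p : A → A → A → A) (n : ℕ) :
    swapIterate p (n + 1) =
      fun x y z => p (swapIterate p n x y z) (swapIterate p n y x z) z := by
  funext x y z
  rw [swapIterate, Function.iterate_succ_apply', iterate_swapStep, swapStep]

theorem IsMajority.ternaryOp_swapIterate (hp : IsMajority (ternaryOp p)) (n : ℕ) :
    IsMajority (ternaryOp (swapIterate p (n + 1))) := by
  induction n with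
  | zero => exact hp
  | succ n ih =>
    rw [swapIterate_succ]
    intro x y
    simp [ternaryOp, ih.apply_left, ih.apply_outer, ih.apply_right, hp.apply_left]

theorem IsClone.ternaryOp_swapIterate_mem (hC : IsClone C)
    (hp : (⟨2, ternaryOp p⟩ : Ops A) ∈ C) (n : ℕ) :
    (⟨2, ternaryOp (swapIterate p n)⟩ : Ops A) ∈ C := by
  induction n with
  | zero => exact hC.1 2 0
  | succ n ih =>
    have hyxz : (⟨2, ternaryOp fun x y z => swapIterate p n y x z⟩ : Ops A) ∈ C :=
      hC.ternaryOp_comp_mem ih (hC.1 2 1) (hC.1 2 0) (hC.1 2 2)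
    rw [swapIterate_succ]
    exact hC.ternaryOp_comp_mem hp ih hyxz (hC.1 2 2)

theorem CyclicallySymmetric.swap_comp_eq (hp : CyclicallySymmetric p)
    (hp₂ : CyclicallySymmetric (swapIterate p 2)) (x y z : A) :
    p (p x y z) (p y x z) z = p (p x y z) (p y x z) x ∧
      p (p x y z) (p y x z) z = p (p x y z) (p y x z) y := by
  have hx : p (p x y z) (p y x z) z = p (p y z x) (p z y x) x := hp₂ x y z
  have hy : p (p z x y) (p x z y) y = p (p x y z) (p y x z) z := hp₂ z x y
  rw [← hp x y z, hp z y x] at hx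
  rw [hp z x y, ← hp y x z] at hy
  exact ⟨hx, hy.symm⟩

theorem CyclicallySymmetric.swapStep_fst (hp : CyclicallySymmetric p)
    (hp₂ : CyclicallySymmetric (swapIterate p 2)) (z : A) (a : A × A) :
    swapStep p a.1 (swapStep p z a) = swapStep p z (swapStep p z a) :=
  Prod.ext (hp.swap_comp_eq hp₂ a.1 a.2 z).1.symm (hp.swap_comp_eq hp₂ a.2 a.1 z).2.symm

theorem CyclicallySymmetric.swapStep_snd (hp : CyclicallySymmetric p)
    (hp₂ : CyclicallySymmetric (swapIterate p 2)) (z : A) (a : A × A) :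
    swapStep p a.2 (swapStep p z a) = swapStep p z (swapStep p z a) :=
  Prod.ext (hp.swap_comp_eq hp₂ a.1 a.2 z).2.symm (hp.swap_comp_eq hp₂ a.2 a.1 z).1.symm

theorem CyclicallySymmetric.swapStep_iterate_of_eq (hp : CyclicallySymmetric p)
    (hp₂ : CyclicallySymmetric (swapIterate p 2)) {w z : A} {a : A × A}
    (hw : swapStep p w a = swapStep p z a) (n : ℕ) :
    swapStep p w ((swapStep p z)^[n] a) = (swapStep p z)^[n + 1] a := by
  induction n with
  | zero => exact hw
  | succ n ih =>
    set b := (swapStep p z)^[n] a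
    have hb : swapStep p w b = swapStep p z b := by
      rw [ih, Function.iterate_succ_apply']
    calc swapStep p w ((swapStep p z)^[n + 1] a)
        = swapStep p w (swapStep p w b) := by rw [ih]
      _ = swapStep p b.1 (swapStep p w b) := (hp.swapStep_fst hp₂ w b).symm
      _ = swapStep p b.1 (swapStep p z b) := by rw [hb]
      _ = swapStep p z (swapStep p z b) := hp.swapStep_fst hp₂ z b
      _ = (swapStep p z)^[n + 2] a := by simp only [b, Function.iterate_succ_apply']

theorem CyclicallySymmetric.fst_eq_snd_of_isPeriodicPt (hp : CyclicallySymmetric p)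
    (hp₂ : CyclicallySymmetric (swapIterate p 2)) (hmaj : IsMajority (ternaryOp p))
    {z : A} {a : A × A} {n : ℕ} (hn : 0 < n)
    (ha : Function.IsPeriodicPt (swapStep p z) n a) :
    a.1 = a.2 := by
  obtain ⟨m, rfl⟩ := Nat.exists_eq_add_one.mpr hn
  have hperiod : (swapStep p z)^[m] (swapStep p z a) = a := ha
  have hstep (w : A) (hw : swapStep p w (swapStep p z a) = swapStep p z (swapStep p z a)) :
      p a.1 a.2 w = p a.1 a.2 z := by
    have h := hp.swapStep_iterate_of_eq hp₂ hw m
    rw [Function.iterate_succ_apply', hperiod] at h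
    exact congrArg Prod.fst h
  calc a.1 = p a.1 a.2 a.1 := (hmaj.apply_outer _ _).symm
    _ = p a.1 a.2 z := hstep _ (hp.swapStep_fst hp₂ z a)
    _ = p a.1 a.2 a.2 := (hstep _ (hp.swapStep_snd hp₂ z a)).symm
    _ = a.2 := hmaj.apply_right _ _

theorem CyclicallySymmetric.swapIterate_comm (hp : CyclicallySymmetric p)
    (hp₂ : CyclicallySymmetric (swapIterate p 2)) (hmaj : IsMajority (ternaryOp p)) {m n : ℕ}
    (hmn : m < n) (h : swapIterate p m = swapIterate p n) (x y z : A) :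
    swapIterate p m x y z = swapIterate p m y x z := by
  have hiter : (swapStep p z)^[m] (x, y) = (swapStep p z)^[n] (x, y) := by
    rw [iterate_swapStep, iterate_swapStep, h]
  have hperiodic := hp.fst_eq_snd_of_isPeriodicPt hp₂ hmaj (Nat.sub_pos_of_lt hmn)
    (isPeriodicPt_iterate_of_iterate_eq hmn.le hiter)
  rwa [iterate_swapStep] at hperiodic

theorem exists_majority_swap_symmetric (hC : IsClone C) (hfin : (majorityOpsIn C).Finite)
    (hcyc : ∀ q, ternaryOp q ∈ majorityOpsIn C → CyclicallySymmetric q)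
    (hp : ternaryOp p ∈ majorityOpsIn C) :
    ∃ q, ternaryOp q ∈ majorityOpsIn C ∧ ∀ x y z, q x y z = q y x z := by
  have hmem (n : ℕ) : ternaryOp (swapIterate p (n + 1)) ∈ majorityOpsIn C :=
    ⟨hp.1.ternaryOp_swapIterate n, hC.ternaryOp_swapIterate_mem hp.2 (n + 1)⟩
  obtain ⟨m, n, hmn, h⟩ := hfin.exists_lt_map_eq_of_forall_mem hmem
  exact ⟨swapIterate p (m + 1), hmem m, (hcyc p hp).swapIterate_comm (hcyc _ (hmem 1)) hp.1
    (Nat.succ_lt_succ hmn) (ternaryOp_injective h)⟩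

end SwapStep

/-! ### Absorption in the first variable -/

section FirstIterate

variable {A : Type u} {C : Set (Ops A)} {p : A → A → A → A}

/-- The `n`-th iterate of a ternary operation as a function of its first variable. -/
def firstIterate (p : A → A → A → A) (n : ℕ) (x y z : A) : A :=
  (fun a => p a y z)^[n] x

theorem firstIterate_succ (p : A → A → A → A) (n : ℕ) :
    firstIterate p (n + 1) = fun x y z => p (firstIterate p n x y z) y z := by
  funext x y z
  exact Function.iterate_succ_apply' _ _ _

theorem IsMajority.ternaryOp_firstIterate (hp : IsMajority (ternaryOp p)) (n : ℕ) :
    IsMajority (ternaryOp (firstIterate p (n + 1))) := by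
  induction n with
  | zero => exact hp
  | succ n ih =>
    rw [firstIterate_succ]
    intro x y
    simp [ternaryOp, ih.apply_left, ih.apply_outer, ih.apply_right, hp.apply_left, hp.apply_outer]

theorem IsClone.ternaryOp_firstIterate_mem (hC : IsClone C)
    (hp : (⟨2, ternaryOp p⟩ : Ops A) ∈ C) (n : ℕ) :
    (⟨2, ternaryOp (firstIterate p n)⟩ : Ops A) ∈ C := by
  induction n with
  | zero => exact hC.1 2 0
  | succ n ih =>
    rw [firstIterate_succ]
    exact hC.ternaryOp_comp_mem hp ih (hC.1 2 1) (hC.1 2 2)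

theorem exists_firstIterate_idem {m n : ℕ} (hmn : m < n)
    (h : firstIterate p m = firstIterate p n) :
    ∃ k, m ≤ k ∧ ∀ x y z,
      firstIterate p k (firstIterate p k x y z) y z = firstIterate p k x y z := by
  have hmk : m ≤ m * (n - m) := Nat.le_mul_of_pos_right m (Nat.sub_pos_of_lt hmn)
  refine ⟨m * (n - m), hmk, fun x y z => ?_⟩
  have hm : Function.IsPeriodicPt (fun a => p a y z) (n - m) (firstIterate p m x y z) :=
    isPeriodicPt_iterate_of_iterate_eq hmn.le (congrFun (congrFun (congrFun h x) y) z)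
  have hk : Function.IsPeriodicPt (fun a => p a y z) (n - m)
      (firstIterate p (m * (n - m)) x y z) := by
    obtain ⟨l, hl⟩ := Nat.exists_eq_add_of_le' hmk
    rw [firstIterate, hl, Function.iterate_add_apply]
    exact hm.apply_iterate l
  exact hk.const_mul m

/-- A totally symmetric majority operation `e` with `e(e(x, y, z), y, z) = e(x, y, z)`. Such
an operation is the only majority operation in the clone it generates, unless `A` is trivial. -/
structure IsAbsorptiveMajority (e : A → A → A → A) : Prop where
  majority : IsMajority (ternaryOp e)
  cyclic : CyclicallySymmetric e
  swap : ∀ x y z, e x y z = e y x z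
  absorb : ∀ x y z, e (e x y z) y z = e x y z

theorem exists_isAbsorptiveMajority (hC : IsClone C) (hfin : (majorityOpsIn C).Finite)
    (hcyc : ∀ q, ternaryOp q ∈ majorityOpsIn C → CyclicallySymmetric q)
    (hne : (majorityOpsIn C).Nonempty) :
    ∃ e, IsAbsorptiveMajority e ∧ (⟨2, ternaryOp e⟩ : Ops A) ∈ C := by
  obtain ⟨f, hf⟩ := hne
  obtain ⟨p, rfl⟩ := ternaryOp_surjective f
  obtain ⟨q, hq, hswap⟩ := exists_majority_swap_symmetric hC hfin hcyc hf
  have hmem (n : ℕ) : ternaryOp (firstIterate q (n + 1)) ∈ majorityOpsIn C :=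
    ⟨hq.1.ternaryOp_firstIterate n, hC.ternaryOp_firstIterate_mem hq.2 (n + 1)⟩
  obtain ⟨m, n, hmn, h⟩ := hfin.exists_lt_map_eq_of_forall_mem hmem
  obtain ⟨k, hk, hidem⟩ :=
    exists_firstIterate_idem (Nat.succ_lt_succ hmn) (ternaryOp_injective h)
  obtain ⟨l, rfl⟩ := Nat.exists_eq_add_one.mpr (Nat.zero_lt_of_lt hk)
  have hlcyc := hcyc _ (hmem l)
  have hqswap (x y z : A) : q x y z = q x z y := by
    rw [hcyc q hq x y z, hswap, ← hcyc q hq x z y]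
  have hlswap (x y z : A) : firstIterate q (l + 1) x y z = firstIterate q (l + 1) x z y := by
    simp only [firstIterate, hqswap _ y z]
  refine ⟨firstIterate q (l + 1), ⟨(hmem l).1, hlcyc, fun x y z => ?_, hidem⟩, (hmem l).2⟩
  rw [← hlcyc z x y, hlswap, hlcyc z y x]

end FirstIterate

/-! ### The clone generated by an absorptive majority operation -/

namespace IsAbsorptiveMajority

variable {A : Type u} {e : A → A → A → A}

theorem pi {X : Type*} (he : IsAbsorptiveMajority e) :
    IsAbsorptiveMajority fun (a b c : X → A) t => e (a t) (b t) (c t) where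
  majority _ _ := ⟨funext fun _ => he.majority.apply_left _ _,
    funext fun _ => he.majority.apply_outer _ _, funext fun _ => he.majority.apply_right _ _⟩
  cyclic _ _ _ := funext fun _ => he.cyclic _ _ _
  swap _ _ _ := funext fun _ => he.swap _ _ _
  absorb _ _ _ := funext fun _ => he.absorb _ _ _

theorem apply_mem (he : IsAbsorptiveMajority e) {x y z a b c : A}
    (ha : a ∈ ({x, y, z, e x y z} : Set A)) (hb : b ∈ ({x, y, z, e x y z} : Set A))
    (hc : c ∈ ({x, y, z, e x y z} : Set A)) : e a b c ∈ ({x, y, z, e x y z} : Set A) := by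
  have hyz : e (e x y z) y z = e x y z := he.absorb x y z
  have hxz : e (e x y z) x z = e x y z := by rw [he.swap x y z, he.absorb]
  have hxy : e (e x y z) x y = e x y z := by rw [← he.cyclic z x y, he.absorb]
  have hleft := he.majority.apply_left
  have houter := he.majority.apply_outer
  have hright := he.majority.apply_right
  have hcyclic := he.cyclic
  have hswap := he.swap
  simp only [Set.mem_insert_iff, Set.mem_singleton_iff] at ha hb hc ⊢
  -- Two arguments coincide, or they are `x`, `y`, `z`, or `e x y z` and two of `x`, `y`, `z`.
  rcases ha with rfl | rfl | rfl | rfl <;> rcases hb with rfl | rfl | rfl | rfl <;>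
    rcases hc with rfl | rfl | rfl | rfl <;> grind [CyclicallySymmetric]

theorem majorityOpsIn_cloneGen [Nontrivial A] (he : IsAbsorptiveMajority e) :
    majorityOpsIn (cloneGen {(⟨2, ternaryOp e⟩ : Ops A)}) = {ternaryOp e} := by
  refine Set.eq_singleton_iff_unique_mem.mpr ⟨⟨he.majority, subset_cloneGen _ rfl⟩, ?_⟩
  rintro f ⟨hf, hfe⟩
  let S : Set ((Fin 3 → A) → A) := {fun t => t 0, fun t => t 1, fun t => t 2, ternaryOp e}
  have hproj (i : Fin 3) : (fun t => t i) ∈ S := by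
    fin_cases i <;> simp [S]
  have hpol : (⟨2, ternaryOp e⟩ : Ops A) ∈ polFun S := fun q hq =>
    he.pi.apply_mem (hq 0) (hq 1) (hq 2)
  have hfS : f ∈ S := mem_of_mem_cloneGen (Set.singleton_subset_iff.mpr hpol) hproj hfe
  rcases hfS with h | h | h | h
  exacts [(hf.ne_proj 0 h).elim, (hf.ne_proj 1 h).elim, (hf.ne_proj 2 h).elim, h]

end IsAbsorptiveMajority

/-- **Waldhauser's Theorem on cyclically symmetric minimal majority clones.**  Let `C`
be a minimal clone on a set `A` generated by a majority operation, containing only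
finitely many majority operations, all of which are cyclically symmetric.  Then `C`
contains exactly one majority operation. -/
theorem waldhauser_cyclically_symmetric {A : Type u} (f : (Fin 3 → A) → A)
    (hf : IsMajority f) (hmin : IsMinimalClone (cloneGen {(⟨2, f⟩ : Ops A)}))
    (hfin : (majorityOpsIn (cloneGen {(⟨2, f⟩ : Ops A)})).Finite)
    (hcyc : ∀ g ∈ majorityOpsIn (cloneGen {(⟨2, f⟩ : Ops A)}),
        ∀ t : Fin 3 → A, g t = g (fun i => t (i + 1))) :
    (majorityOpsIn (cloneGen {(⟨2, f⟩ : Ops A)})).ncard = 1 := by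
  have hfC : f ∈ majorityOpsIn (cloneGen {(⟨2, f⟩ : Ops A)}) := ⟨hf, subset_cloneGen _ rfl⟩
  have : Nontrivial A := hmin.nontrivial
  obtain ⟨e, he, heC⟩ := exists_isAbsorptiveMajority hmin.1 hfin
    (fun p hp x y z => hcyc _ hp ![x, y, z]) ⟨f, hfC⟩
  have hgen : cloneGen {(⟨2, ternaryOp e⟩ : Ops A)} = cloneGen {(⟨2, f⟩ : Ops A)} :=
    hmin.cloneGen_singleton_eq heC he.majority.notMem_projClone
  rw [← hgen, he.majorityOpsIn_cloneGen, Set.ncard_singleton]
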